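/- Let s be a real number with -1/2 < s ≤ 1/2. There exists a constant c > 0 (depending only on s) such that for every prime p > 2, letting L be the ternary Legendre sequence of length p, | (1/p²) ∑_u C_{L_s}(u)² - (7/6 + 8(|s| - 1/4)²) | ≤ c · p^{-1} (log p)². -/

import Mathlib

open scoped BigOperators

noncomputable section

/-- `A` is an array of size `n × m`: entries vanish outside `[0,n) × [0,m)`. -/
def IsArray (n m : ℤ) (A : ℤ × ℤ → ℝ) : Prop :=
  ∀ i j : ℤ, A (i, j) ≠ 0 → 0 ≤ i ∧ i < n ∧ 0 ≤ j ∧ j < m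

/-- `A` is a binary array of size `n × m`. -/
def IsBinaryArray (n m : ℤ) (A : ℤ × ℤ → ℝ) : Prop :=
  IsArray n m A ∧
    ∀ i j : ℤ, 0 ≤ i → i < n → 0 ≤ j → j < m → A (i, j) = 1 ∨ A (i, j) = -1

/-- Aperiodic autocorrelation of a two-dimensional array at displacement `(u, v)`. -/
def autocorr (A : ℤ × ℤ → ℝ) (u v : ℤ) : ℝ :=
  ∑ᶠ i : ℤ, ∑ᶠ j : ℤ, A (i, j) * A (i + u, j + v)

/-- Merit factor of an array of size `n × m`. -/
def meritFactor (n m : ℤ) (A : ℤ × ℤ → ℝ) : ℝ :=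
  ((n : ℝ) * m) ^ 2 / ∑ᶠ uv ∈ {x : ℤ × ℤ | x ≠ (0, 0)}, (autocorr A uv.1 uv.2) ^ 2

/-- `a` is a sequence of length `n`: entries vanish outside `[0,n)`. -/
def IsSeq (n : ℤ) (a : ℤ → ℝ) : Prop := ∀ i : ℤ, a i ≠ 0 → 0 ≤ i ∧ i < n

/-- `a` is a binary sequence of length `n`. -/
def IsBinarySeq (n : ℤ) (a : ℤ → ℝ) : Prop :=
  IsSeq n a ∧ ∀ i : ℤ, 0 ≤ i → i < n → a i = 1 ∨ a i = -1

/-- Aperiodic autocorrelation of a sequence at displacement `u`. -/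
def seqAutocorr (a : ℤ → ℝ) (u : ℤ) : ℝ := ∑ᶠ i : ℤ, a i * a (i + u)

/-- Merit factor of a sequence of length `n`. -/
def seqMeritFactor (n : ℤ) (a : ℤ → ℝ) : ℝ :=
  (n : ℝ) ^ 2 / ∑ᶠ u ∈ {u : ℤ | u ≠ 0}, (seqAutocorr a u) ^ 2

/-- Rotation of a sequence of length `n` by a real number `s`. -/
def seqRotate (n : ℤ) (s : ℝ) (a : ℤ → ℝ) : ℤ → ℝ :=
  fun i => if 0 ≤ i ∧ i < n then a ((i + ⌊(n : ℝ) * s⌋) % n) else 0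

/-- Rotation of an array of size `n × m` by real numbers `s` and `t`. -/
def arrRotate (n m : ℤ) (s t : ℝ) (A : ℤ × ℤ → ℝ) : ℤ × ℤ → ℝ :=
  fun x => if 0 ≤ x.1 ∧ x.1 < n ∧ 0 ≤ x.2 ∧ x.2 < m then
    A ((x.1 + ⌊(n : ℝ) * s⌋) % n, (x.2 + ⌊(m : ℝ) * t⌋) % m) else 0

/-- Generating function of an array of size `n × m`, evaluated at `(x, y)`. -/
def genFun (n m : ℕ) (A : ℤ × ℤ → ℝ) (x y : ℂ) : ℂ :=
  ∑ i ∈ Finset.range n, ∑ j ∈ Finset.range m, (A (i, j) : ℂ) * x ^ i * y ^ j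

/-- `zeta d = e^{iπ/d}`, a primitive `(2d)`-th root of unity. -/
def zeta (d : ℕ) : ℂ := Complex.exp (Real.pi * Complex.I / d)

/-- `eps p j = e^{2πij/p}`, a `p`-th root of unity. -/
def eps (p : ℕ) (j : ℤ) : ℂ := Complex.exp (2 * Real.pi * Complex.I * j / p)

/-- The Legendre sequence of length `p` (for `p` an odd prime). -/
def legendreSeq (p : ℕ) : ℤ → ℝ :=
  fun i => if 0 ≤ i ∧ i < p then (if i = 0 then 1 else (jacobiSym i p : ℝ)) else 0

/-- The ternary Legendre sequence of length `p` (for `p` an odd prime). -/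
def ternaryLegendreSeq (p : ℕ) : ℤ → ℝ :=
  fun i => if 0 ≤ i ∧ i < p then (jacobiSym i p : ℝ) else 0

/-!
Write `χ` for the quadratic character mod `p`, `ψ` for the standard additive character, and
`r = ⌊p s⌋`. Expanding both factors `χ (i + r)` and `χ (i + u + r)` through Gauss sums turns the
sum over the window `0 ≤ i < p - u` into a geometric sum, and `p C(u)`, up to an elementary term,
becomes the discrete Fourier transform at `u` of `a ↦ χ a · E a`, where `E a = ∑ d, χ (a + d) K d`
and `K` is an explicit odd kernel built from `ψ (d r) / (ψ d - 1)`. Parseval and the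
near-orthogonality of the translates of `χ` reduce the sum of squares to `p ∑ d, K d ^ 2`, and a
second-difference recursion for the Fourier transform of `|ψ d - 1|⁻²` evaluates this as a
multiple of `(p² - 1) / 3 - v (p - v)`, `v = (2 r - 1) mod p`. Since `v / p` is within `O(1 / p)`
of the fractional part of `2 s`, this gives the main term. The remaining terms are controlled by
`∑ d, |ψ d - 1|⁻¹ ≤ (p / 2) (1 + log p)`, which is where the squared logarithm comes from.
-/

section FourierAnalysis

open ZMod Finset

variable {N : ℕ} [NeZero N]

local notation "ψ" => (stdAddChar : AddChar (ZMod N) ℂ)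

lemma sum_comp_zmodVal {M : Type*} [AddCommMonoid M] (f : ℕ → M) :
    ∑ x : ZMod N, f x.val = ∑ n ∈ range N, f n := by
  obtain ⟨n, rfl⟩ := Nat.exists_eq_succ_of_ne_zero (NeZero.ne N)
  exact Fin.sum_univ_eq_sum_range f (n + 1)

lemma sum_stdAddChar_neg_mul (m : ZMod N) :
    ∑ x, ψ (-(x * m)) = if m = 0 then (N : ℂ) else 0 := by
  simpa [ZMod.card] using AddChar.sum_mulShift (-m) (isPrimitive_stdAddChar N)

lemma stdAddChar_sub_one_ne_zero {d : ZMod N} (hd : d ≠ 0) : ψ d - 1 ≠ 0 := by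
  rw [sub_ne_zero, ← AddChar.map_zero_eq_one ψ]
  exact injective_stdAddChar.ne hd

lemma stdAddChar_mul_stdAddChar_neg (d : ZMod N) : ψ d * ψ (-d) = 1 := by
  rw [← AddChar.map_add_eq_mul, add_neg_cancel, AddChar.map_zero_eq_one]

lemma sum_mul_dft (Φ Ψ : ZMod N → ℂ) : ∑ k, Φ k * 𝓕 Ψ k = ∑ k, 𝓕 Φ k * Ψ k := by
  simp only [dft_apply, smul_eq_mul, mul_sum, sum_mul]
  rw [sum_comm]
  refine sum_congr rfl fun j _ => sum_congr rfl fun k _ => ?_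
  rw [mul_comm j k]
  ring

lemma sum_dft_mul_dft (Φ Ψ : ZMod N → ℂ) :
    ∑ k, 𝓕 Φ k * 𝓕 Ψ k = N * ∑ k, Φ k * Ψ (-k) := by
  rw [← sum_mul_dft, dft_dft, mul_sum]
  exact sum_congr rfl fun k _ => mul_left_comm _ _ _

lemma sum_dft (Φ : ZMod N → ℂ) : ∑ k, 𝓕 Φ k = N * Φ 0 := by
  rw [← dft_apply_zero, dft_dft]
  simp

lemma sub_one_mul_sum_range_mul_pow {R : Type*} [CommRing R] (w : R) (n : ℕ) :
    (w - 1) * ∑ k ∈ range n, k * w ^ k = n * w ^ n - w * ∑ k ∈ range n, w ^ k := by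
  induction n with
  | zero => simp
  | succ n ih =>
    rw [sum_range_succ, mul_add, ih, sum_range_succ]
    push_cast
    ring

lemma dft_val {a : ZMod N} (ha : a ≠ 0) :
    𝓕 (fun u : ZMod N => (u.val : ℂ)) a = N / (ψ (-a) - 1) := by
  have hne : ψ (-a) - 1 ≠ 0 := stdAddChar_sub_one_ne_zero (neg_ne_zero.2 ha)
  have hpow (n : ℕ) : ψ (n • -a) = ψ (-a) ^ n := AddChar.map_nsmul_eq_pow ..
  have hroot : ψ (-a) ^ N = 1 := by simp [← hpow]
  have hdft : 𝓕 (fun u : ZMod N => (u.val : ℂ)) a = ∑ n ∈ range N, (n : ℂ) * ψ (-a) ^ n := by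
    rw [← sum_comp_zmodVal fun n => (n : ℂ) * ψ (-a) ^ n, dft_apply]
    refine sum_congr rfl fun u _ => ?_
    rw [← hpow, nsmul_eq_mul, natCast_zmod_val, mul_neg, smul_eq_mul, mul_comm]
  rw [hdft, eq_div_iff hne, mul_comm, sub_one_mul_sum_range_mul_pow, hroot,
    geom_sum_eq (sub_ne_zero.1 hne), hroot]
  simp

/-- The inverse squared length `|ψ d - 1|⁻²` of the chord from `1` to the root of unity `ψ d`,
set to `0` at `d = 0`. Its discrete Fourier transform at `m`, a quadratic polynomial in `m.val`,
gives the main term of the theorem. -/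
def invChordSq (d : ZMod N) : ℂ := ((ψ d - 1) * (ψ (-d) - 1))⁻¹

lemma invChordSq_zero : invChordSq (0 : ZMod N) = 0 := by
  simp [invChordSq]

lemma even_invChordSq : (invChordSq (N := N)).Even := fun d => by
  rw [invChordSq, invChordSq, neg_neg, mul_comm]

lemma dft_invChordSq_second_diff (m : ZMod N) :
    𝓕 invChordSq (m + 1) + 𝓕 invChordSq (m - 1) - 2 * 𝓕 invChordSq m =
      1 - if m = 0 then (N : ℂ) else 0 := by
  have hterm (d : ZMod N) : ψ (-(d * (m + 1))) * invChordSq d +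
      ψ (-(d * (m - 1))) * invChordSq d - 2 * (ψ (-(d * m)) * invChordSq d) =
        (if d = 0 then 1 else 0) - ψ (-(d * m)) := by
    have hadd : ψ (-(d * (m + 1))) = ψ (-(d * m)) * ψ (-d) := by
      rw [← AddChar.map_add_eq_mul, mul_add, mul_one, neg_add]
    have hsub : ψ (-(d * (m - 1))) = ψ (-(d * m)) * ψ d := by
      rw [← AddChar.map_add_eq_mul, mul_sub, mul_one, neg_sub', sub_neg_eq_add]
    rcases eq_or_ne d 0 with rfl | hd
    · simp [invChordSq_zero]
    have h₁ := stdAddChar_sub_one_ne_zero hd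
    have h₂ := stdAddChar_sub_one_ne_zero (neg_ne_zero.2 hd)
    rw [hadd, hsub, invChordSq, if_neg hd]
    field_simp
    linear_combination ψ (-(d * m)) * stdAddChar_mul_stdAddChar_neg d
  simp only [dft_apply, smul_eq_mul]
  rw [mul_sum, ← sum_add_distrib, ← sum_sub_distrib, sum_congr rfl fun d _ => hterm d,
    sum_sub_distrib, sum_stdAddChar_neg_mul, sum_ite_eq', if_pos (mem_univ _)]

lemma dft_invChordSq_natCast {n : ℕ} (hn : n ≤ N) :
    𝓕 invChordSq (n : ZMod N) = 𝓕 invChordSq (0 : ZMod N) - n * (N - n) / 2 := by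
  induction n using Nat.twoStepInduction with
  | zero => simp
  | one =>
    have h := dft_invChordSq_second_diff (0 : ZMod N)
    rw [zero_add, zero_sub, dft_even_iff.2 even_invChordSq, if_pos rfl] at h
    push_cast
    linear_combination h / 2
  | more n ih₀ ih₁ =>
    have hne : ((n + 1 : ℕ) : ZMod N) ≠ 0 := by
      rw [Ne, natCast_eq_zero_iff]
      exact Nat.not_dvd_of_pos_of_lt n.succ_pos (by omega)
    have hsucc : ((n + 1 : ℕ) : ZMod N) + 1 = (n + 2 : ℕ) := by push_cast; ring
    have hpred : ((n + 1 : ℕ) : ZMod N) - 1 = n := by push_cast; ring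
    have h := dft_invChordSq_second_diff ((n + 1 : ℕ) : ZMod N)
    rw [if_neg hne, hsucc, hpred, ih₀ (by omega), ih₁ (by omega)] at h
    push_cast at h ⊢
    linear_combination h

lemma sum_range_mul_sub {K : Type*} [Field K] [CharZero K] (x : K) (n : ℕ) :
    ∑ k ∈ range n, (k : K) * (x - k) = n * (n - 1) * (3 * x - 2 * n + 1) / 6 := by
  induction n with
  | zero => simp
  | succ n ih =>
    rw [sum_range_succ, ih]
    push_cast
    ring

lemma dft_invChordSq_zero : 𝓕 invChordSq (0 : ZMod N) = ((N : ℂ) ^ 2 - 1) / 12 := by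
  have hN : (N : ℂ) ≠ 0 := NeZero.ne _
  have hsum : ∑ n ∈ range N, (𝓕 invChordSq (0 : ZMod N) - n * (N - n) / 2) = 0 := by
    rw [← sum_comp_zmodVal fun n => 𝓕 invChordSq (0 : ZMod N) - (n : ℂ) * (N - n) / 2]
    calc ∑ m : ZMod N, (𝓕 invChordSq (0 : ZMod N) - (m.val : ℂ) * (N - m.val) / 2)
        = ∑ m : ZMod N, 𝓕 invChordSq m := sum_congr rfl fun m _ => by
          rw [← dft_invChordSq_natCast m.val_lt.le, natCast_zmod_val]
      _ = 0 := by rw [sum_dft, invChordSq_zero, mul_zero]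
  rw [sum_sub_distrib, ← sum_div, sum_range_mul_sub, sum_const, card_range, nsmul_eq_mul] at hsum
  apply mul_left_cancel₀ hN
  linear_combination hsum

lemma dft_invChordSq (m : ZMod N) :
    𝓕 invChordSq m = ((N : ℂ) ^ 2 - 1) / 12 - m.val * (N - m.val) / 2 := by
  rw [← dft_invChordSq_zero, ← dft_invChordSq_natCast m.val_lt.le, natCast_zmod_val]

lemma norm_stdAddChar (d : ZMod N) : ‖ψ d‖ = 1 := by
  rw [stdAddChar_apply, Circle.norm_coe]

lemma norm_stdAddChar_neg_sub_one (d : ZMod N) : ‖ψ (-d) - 1‖ = ‖ψ d - 1‖ := by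
  rw [← Complex.norm_conj, map_sub, map_one, AddChar.map_neg_eq_conj, Complex.conj_conj]

lemma two_mul_mul_one_sub_le_sin {x : ℝ} (hx₀ : 0 ≤ x) (hx₁ : x ≤ 1) :
    2 * x * (1 - x) ≤ Real.sin (Real.pi * x) := by
  wlog hx : x ≤ 1 / 2 generalizing x
  · have h := this (x := 1 - x) (by linarith) (by linarith) (by linarith)
    rw [mul_one_sub Real.pi, Real.sin_pi_sub] at h
    linarith
  have hpi := Real.pi_pos
  calc 2 * x * (1 - x) ≤ 2 * x := mul_le_of_le_one_right (by positivity) (by linarith)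
    _ = 2 / Real.pi * (Real.pi * x) := by field_simp
    _ ≤ Real.sin (Real.pi * x) := Real.mul_le_sin (by positivity) (by nlinarith)

lemma four_mul_val_div_mul_le_norm_stdAddChar_sub_one (d : ZMod N) :
    4 * (d.val / N : ℝ) * (1 - d.val / N) ≤ ‖ψ d - 1‖ := by
  have hle : (d.val / N : ℝ) ≤ 1 := div_le_one_of_le₀ (mod_cast d.val_lt.le) (by positivity)
  have hexp : ψ d = Complex.exp (Complex.I * (2 * Real.pi * (d.val / N) : ℝ)) := by
    conv_lhs => rw [← natCast_zmod_val d, ← Int.cast_natCast, stdAddChar_coe]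
    congr 1
    push_cast
    ring
  calc 4 * (d.val / N : ℝ) * (1 - d.val / N)
      = 2 * (2 * (d.val / N) * (1 - d.val / N)) := by ring
    _ ≤ 2 * Real.sin (Real.pi * (d.val / N)) := by
      gcongr
      exact two_mul_mul_one_sub_le_sin (by positivity) hle
    _ ≤ ‖2 * Real.sin (2 * Real.pi * (d.val / N) / 2)‖ := by
      rw [mul_assoc 2 Real.pi, mul_div_cancel_left₀ _ two_ne_zero]
      exact Real.le_norm_self _
    _ = ‖ψ d - 1‖ := by rw [hexp, Complex.norm_exp_I_mul_ofReal_sub_one]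

lemma inv_norm_stdAddChar_sub_one_le (d : ZMod N) :
    ‖ψ d - 1‖⁻¹ ≤ N / 4 * ((d.val : ℝ)⁻¹ + ((-d).val : ℝ)⁻¹) := by
  rcases eq_or_ne d 0 with rfl | hd
  · simp
  have hN : (0 : ℝ) < N := mod_cast NeZero.pos N
  have hval : (0 : ℝ) < d.val := mod_cast val_pos.2 hd
  have hlt : (0 : ℝ) < N - d.val := sub_pos.2 (mod_cast d.val_lt)
  have hneg : ((-d).val : ℝ) = N - d.val := by
    rw [neg_val, if_neg hd, Nat.cast_sub d.val_lt.le]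
  have hchord : 4 * (d.val : ℝ) * (N - d.val) / N ^ 2 ≤ ‖ψ d - 1‖ :=
    (four_mul_val_div_mul_le_norm_stdAddChar_sub_one d).trans' (by field_simp; rfl)
  calc ‖ψ d - 1‖⁻¹ ≤ (4 * (d.val : ℝ) * (N - d.val) / N ^ 2)⁻¹ := by gcongr
    _ = N / 4 * ((d.val : ℝ)⁻¹ + ((-d).val : ℝ)⁻¹) := by
      rw [hneg]
      field_simp
      ring

lemma sum_range_inv_natCast_le (n : ℕ) : ∑ k ∈ range n, (k : ℝ)⁻¹ ≤ 1 + Real.log n := by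
  calc ∑ k ∈ range n, (k : ℝ)⁻¹ ≤ ∑ k ∈ range (n + 1), (k : ℝ)⁻¹ :=
        sum_le_sum_of_subset_of_nonneg (range_subset_range.2 n.le_succ) fun _ _ _ => by positivity
    _ = (harmonic n : ℝ) := by simp [harmonic, sum_range_succ']
    _ ≤ 1 + Real.log n := harmonic_le_one_add_log n

/-- The term `d = 0` of the sum is `0⁻¹ = 0`. -/
lemma sum_inv_norm_stdAddChar_sub_one_le :
    ∑ d : ZMod N, ‖ψ d - 1‖⁻¹ ≤ N / 2 * (1 + Real.log N) := by
  have hneg : ∑ d : ZMod N, ((-d).val : ℝ)⁻¹ = ∑ d : ZMod N, (d.val : ℝ)⁻¹ :=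
    Equiv.sum_comp (Equiv.neg _) fun d : ZMod N => (d.val : ℝ)⁻¹
  calc ∑ d : ZMod N, ‖ψ d - 1‖⁻¹
      ≤ ∑ d : ZMod N, N / 4 * ((d.val : ℝ)⁻¹ + ((-d).val : ℝ)⁻¹) :=
        sum_le_sum fun d _ => inv_norm_stdAddChar_sub_one_le d
    _ = N / 2 * ∑ k ∈ range N, (k : ℝ)⁻¹ := by
      rw [← mul_sum, sum_add_distrib, hneg, sum_comp_zmodVal fun k => (k : ℝ)⁻¹]
      ring
    _ ≤ N / 2 * (1 + Real.log N) := by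
      gcongr
      exact sum_range_inv_natCast_le N

end FourierAnalysis

section MultiplicativeCharacters

open Finset

variable {F R : Type*} [Field F] [CommRing R]

lemma one_mulChar_apply_eq_one_sub_ite [DecidableEq F] (a : F) :
    (1 : MulChar F R) a = 1 - if a = 0 then 1 else 0 := by
  split_ifs with ha
  · rw [ha, MulChar.map_zero, sub_self]
  · rw [MulChar.one_apply (isUnit_iff_ne_zero.2 ha), sub_zero]

lemma mulChar_mul_self_of_isQuadratic [DecidableEq F] {χ : MulChar F R} (hχ : χ.IsQuadratic)
    (a : F) : χ a * χ a = 1 - if a = 0 then 1 else 0 := by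
  rw [← one_mulChar_apply_eq_one_sub_ite, ← mul_inv_cancel χ, MulChar.mul_apply, hχ.inv]

variable [Fintype F] [IsDomain R] {χ : MulChar F R}

lemma sum_mulChar_add_mul_inv_add [DecidableEq F] (hχ : χ ≠ 1) (d e : F) :
    ∑ a, χ (a + d) * χ⁻¹ (a + e) = (if d = e then (Fintype.card F : R) else 0) - 1 := by
  split_ifs with hde
  · subst hde
    calc ∑ a, χ (a + d) * χ⁻¹ (a + d)
        = ∑ a, χ a * χ⁻¹ a := Equiv.sum_comp (Equiv.addRight d) fun a => χ a * χ⁻¹ a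
      _ = ∑ a : F, (1 : MulChar F R) a := by simp_rw [← MulChar.mul_apply, mul_inv_cancel]
      _ = Fintype.card F - 1 := by
        rw [MulChar.sum_one_eq_card_units, Fintype.card_eq_card_units_add_one F, Nat.cast_add_one,
          add_sub_cancel_right]
  · have ht : d - e ≠ 0 := sub_ne_zero.2 hde
    have hsub (x : F) : (d - e) * x - d + e = -(d - e) * (1 - x) := by ring
    have hscalar : χ (d - e) * χ⁻¹ (-(d - e)) * χ (-1) = 1 := by
      rw [mul_right_comm, ← map_mul, mul_neg_one, ← MulChar.mul_apply, mul_inv_cancel,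
        MulChar.one_apply (neg_ne_zero.2 ht).isUnit]
    calc ∑ a, χ (a + d) * χ⁻¹ (a + e)
        = ∑ x, χ ((d - e) * x) * χ⁻¹ (-(d - e) * (1 - x)) := by
          rw [← ((Equiv.mulLeft₀ _ ht).trans (Equiv.subRight d)).sum_comp]
          simp [hsub]
      _ = χ (d - e) * χ⁻¹ (-(d - e)) * jacobiSum χ χ⁻¹ := by
          rw [jacobiSum, mul_sum]
          exact sum_congr rfl fun x _ => by rw [map_mul, map_mul]; ring
      _ = 0 - 1 := by
          rw [jacobiSum_nontrivial_inv hχ]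
          linear_combination -hscalar

lemma sum_mulChar_conv_mul_inv_conv (hχ : χ ≠ 1) (K L : F → R) :
    ∑ a, (∑ d, χ (a + d) * K d) * ∑ e, χ⁻¹ (a + e) * L e =
      Fintype.card F * ∑ d, K d * L d - (∑ d, K d) * ∑ e, L e := by
  classical
  calc ∑ a, (∑ d, χ (a + d) * K d) * ∑ e, χ⁻¹ (a + e) * L e
      = ∑ d, ∑ e, K d * L e * ∑ a, χ (a + d) * χ⁻¹ (a + e) := by
        simp_rw [sum_mul_sum]
        rw [sum_comm]
        refine sum_congr rfl fun d _ => ?_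
        rw [sum_comm]
        refine sum_congr rfl fun e _ => ?_
        rw [mul_sum]
        exact sum_congr rfl fun a _ => mul_mul_mul_comm .. |>.trans (mul_comm _ _)
    _ = Fintype.card F * ∑ d, K d * L d - (∑ d, K d) * ∑ e, L e := by
        simp_rw [sum_mulChar_add_mul_inv_add hχ, mul_sub_one, sum_sub_distrib, mul_ite, mul_zero,
          sum_ite_eq, mem_univ, if_true, sum_mul_sum, mul_sum]
        simp only [mul_comm]

lemma sum_mulChar_mul_addChar (hχ : χ ≠ 1) (φ : AddChar F R) (t : F) :
    ∑ a, χ a * φ (a * t) = χ⁻¹ t * gaussSum χ φ := by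
  rcases eq_or_ne t 0 with rfl | ht
  · simp [MulChar.sum_eq_zero_of_ne_one hχ, MulChar.map_zero]
  · simpa [gaussSum, AddChar.mulShift_apply, mul_comm] using
      gaussSum_mulShift_eq χ φ (Units.mk0 t ht)

lemma sum_one_mulChar_mul_addChar [DecidableEq F] {φ : AddChar F R} (hφ : φ.IsPrimitive) (t : F) :
    ∑ a, (1 : MulChar F R) a * φ (a * t) = (if t = 0 then (Fintype.card F : R) else 0) - 1 := by
  simp_rw [one_mulChar_apply_eq_one_sub_ite, sub_mul, one_mul, sum_sub_distrib,
    AddChar.sum_mulShift t hφ]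
  simp

lemma card_mul_inv_mulChar_mul_mulChar (hχ : χ ≠ 1) {φ : AddChar F R} (hφ : φ.IsPrimitive)
    (i j : F) :
    Fintype.card F * (χ⁻¹ i * χ j) = ∑ a, ∑ b, χ a * χ⁻¹ b * φ (a * i - b * j) := by
  calc Fintype.card F * (χ⁻¹ i * χ j)
      = (χ⁻¹ i * gaussSum χ φ) * (χ⁻¹⁻¹ j * gaussSum χ⁻¹ φ⁻¹) := by
        rw [← gaussSum_mul_gaussSum_eq_card hχ hφ, inv_inv]
        ring
    _ = ∑ a, ∑ b, χ a * χ⁻¹ b * φ (a * i - b * j) := by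
        rw [← sum_mulChar_mul_addChar hχ, ← sum_mulChar_mul_addChar (inv_ne_one.2 hχ), sum_mul_sum]
        refine sum_congr rfl fun a _ => sum_congr rfl fun b _ => ?_
        rw [AddChar.inv_apply, sub_eq_add_neg, AddChar.map_add_eq_mul]
        ring

end MultiplicativeCharacters

section AutocorrelationOfCharacters

open ZMod Finset

variable {N : ℕ}

/-- The aperiodic autocorrelation at displacement `u.val` of the sequence `f r, f (r + 1), …` of
length `N`. -/
def windowCorr {R : Type*} [CommSemiring R] (f : ZMod N → R) (r u : ZMod N) : R :=
  ∑ i ∈ range (N - u.val), f (i + r) * f (i + u + r)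

lemma map_windowCorr {R S : Type*} [CommSemiring R] [CommSemiring S] (φ : R →+* S)
    (f : ZMod N → R) (r u : ZMod N) : φ (windowCorr f r u) = windowCorr (φ ∘ f) r u := by
  simp [windowCorr]

variable [NeZero N]

local notation "ψ" => (stdAddChar : AddChar (ZMod N) ℂ)

/-- The part `ψ (d r) / (ψ d - 1)` of the geometric sum `∑ i < n, ψ (d (r + i))` that depends only
on the left end of the interval of summation; its value at `d = 0` is `0`. -/
def intervalKernel (r d : ZMod N) : ℂ := ψ (d * r) / (ψ d - 1)

/-- The antisymmetrization in `d` of `intervalKernel r d`: the kernel against which the quadratic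
character is summed once the Gauss sum expansion of `windowCorr` has been symmetrized. -/
def oddIntervalKernel (r d : ZMod N) : ℂ := intervalKernel r (-d) - intervalKernel r d

lemma odd_oddIntervalKernel (r : ZMod N) : (oddIntervalKernel r).Odd := fun d => by
  rw [oddIntervalKernel, oddIntervalKernel, neg_neg, neg_sub]

lemma norm_oddIntervalKernel_le (r d : ZMod N) : ‖oddIntervalKernel r d‖ ≤ 2 * ‖ψ d - 1‖⁻¹ := by
  have hnorm (e : ZMod N) : ‖intervalKernel r e‖ = ‖ψ e - 1‖⁻¹ := by
    rw [intervalKernel, norm_div, norm_stdAddChar, one_div]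
  calc ‖oddIntervalKernel r d‖ ≤ ‖intervalKernel r (-d)‖ + ‖intervalKernel r d‖ := norm_sub_le _ _
    _ = 2 * ‖ψ d - 1‖⁻¹ := by rw [hnorm, hnorm, norm_stdAddChar_neg_sub_one, two_mul]

lemma intervalKernel_mul_intervalKernel_neg (r d : ZMod N) :
    intervalKernel r d * intervalKernel r (-d) = invChordSq d := by
  rw [intervalKernel, intervalKernel, invChordSq, div_mul_div_comm, neg_mul,
    stdAddChar_mul_stdAddChar_neg, one_div]

lemma intervalKernel_sq (r d : ZMod N) :
    intervalKernel r d ^ 2 = -(ψ (d * (2 * r - 1)) * invChordSq d) := by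
  rcases eq_or_ne d 0 with rfl | hd
  · simp [intervalKernel, invChordSq_zero]
  have h₁ := stdAddChar_sub_one_ne_zero hd
  have h₂ := stdAddChar_sub_one_ne_zero (neg_ne_zero.2 hd)
  have hψ : ψ (d * (2 * r - 1)) = ψ (d * r) ^ 2 * ψ (-d) := by
    rw [← AddChar.map_nsmul_eq_pow, ← AddChar.map_add_eq_mul, nsmul_eq_mul]
    congr 1
    push_cast
    ring
  rw [hψ, intervalKernel, invChordSq]
  field_simp
  linear_combination ψ (d * r) ^ 2 * stdAddChar_mul_stdAddChar_neg d

lemma sum_oddIntervalKernel_sq (r : ZMod N) :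
    ∑ d, oddIntervalKernel r d ^ 2 =
      (2 * r - 1).val * (N - (2 * r - 1).val) - ((N : ℂ) ^ 2 - 1) / 3 := by
  have hsum (m : ZMod N) : ∑ d, ψ (d * m) * invChordSq d = 𝓕 invChordSq m := by
    rw [← dft_even_iff.2 even_invChordSq]
    simp only [dft_apply, mul_neg, neg_neg, smul_eq_mul]
  have hterm (d : ZMod N) : oddIntervalKernel r d ^ 2 =
      -(ψ (-d * (2 * r - 1)) * invChordSq (-d)) - ψ (d * (2 * r - 1)) * invChordSq d
        - 2 * (ψ (d * 0) * invChordSq d) := by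
    rw [mul_zero, AddChar.map_zero_eq_one, one_mul, oddIntervalKernel]
    linear_combination intervalKernel_sq r d + intervalKernel_sq r (-d) -
      2 * intervalKernel_mul_intervalKernel_neg r d
  have hneg : ∑ d, ψ (-d * (2 * r - 1)) * invChordSq (-d) = 𝓕 invChordSq (2 * r - 1) := by
    rw [← hsum]
    exact Equiv.sum_comp (Equiv.neg _) fun d => ψ (d * (2 * r - 1)) * invChordSq d
  simp_rw [hterm, sum_sub_distrib, sum_neg_distrib, hneg, ← mul_sum, hsum, dft_invChordSq]
  rw [val_zero]
  push_cast
  ring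

lemma windowCorr_zero {R : Type*} [CommSemiring R] (f : ZMod N → R) (r : ZMod N) :
    windowCorr f r 0 = ∑ x, f x * f x := by
  rw [windowCorr, val_zero, Nat.sub_zero, ← sum_comp_zmodVal fun i => f (i + r) * f (i + 0 + r)]
  simp only [natCast_zmod_val, add_zero]
  exact Equiv.sum_comp (Equiv.addRight r) fun x => f x * f x

lemma sum_range_stdAddChar (r u a b : ZMod N) :
    ∑ i ∈ range (N - u.val), ψ (a * (i + r) - b * (i + u + r)) =
      (if a = b then (N - u.val) * ψ (-(a * u)) else 0) +
        (ψ (-(a * u)) - ψ (-(b * u))) * intervalKernel r (a - b) := by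
  have hterm (i : ℕ) : ψ (a * (i + r) - b * (i + u + r)) =
      ψ ((a - b) * r) * ψ (-(b * u)) * ψ (a - b) ^ i := by
    rw [← AddChar.map_nsmul_eq_pow, ← AddChar.map_add_eq_mul, ← AddChar.map_add_eq_mul,
      nsmul_eq_mul]
    ring_nf
  simp_rw [hterm, ← mul_sum]
  split_ifs with hab
  · subst hab
    simp [Nat.cast_sub u.val_lt.le, mul_comm]
  · have hne : ψ (a - b) - 1 ≠ 0 := stdAddChar_sub_one_ne_zero (sub_ne_zero.2 hab)
    have hend : ψ (-(b * u)) * ψ (a - b) ^ (N - u.val) = ψ (-(a * u)) := by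
      rw [← AddChar.map_nsmul_eq_pow, ← AddChar.map_add_eq_mul, nsmul_eq_mul,
        Nat.cast_sub u.val_lt.le, natCast_self, natCast_zmod_val]
      ring_nf
    rw [geom_sum_eq (sub_ne_zero.1 hne), intervalKernel, ← hend]
    ring

/-- The cyclic correlation of `χ` with `oddIntervalKernel r`: up to the factor `χ a`, the
coefficient of the frequency `a` in the Gauss sum expansion of `windowCorr χ r`. -/
def kernelCorr (χ : DirichletCharacter ℂ N) (r a : ZMod N) : ℂ :=
  ∑ d, χ (a + d) * oddIntervalKernel r d

/-- The coefficients whose discrete Fourier transform is the nontrivial part of the aperiodic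
autocorrelations `windowCorr χ r` of a quadratic character `χ`. -/
def corrCoeff (χ : DirichletCharacter ℂ N) (r a : ZMod N) : ℂ := χ a * kernelCorr χ r a

lemma odd_corrCoeff (χ : DirichletCharacter ℂ N) (r : ZMod N) : (corrCoeff χ r).Odd := fun a => by
  have hkernel : kernelCorr χ r (-a) = -(χ (-1) * kernelCorr χ r a) := by
    rw [kernelCorr, kernelCorr, mul_sum, ← sum_neg_distrib,
      ← Equiv.sum_comp (Equiv.neg (ZMod N))]
    refine sum_congr rfl fun d _ => ?_
    rw [Equiv.neg_apply, odd_oddIntervalKernel, ← neg_add, ← neg_one_mul (a + d), map_mul]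
    ring
  have hsq : χ (-1) * χ (-1) = 1 := by rw [← map_mul, neg_one_mul, neg_neg, map_one]
  rw [corrCoeff, corrCoeff, hkernel, ← neg_one_mul a, map_mul]
  linear_combination -χ a * kernelCorr χ r a * hsq

lemma norm_kernelCorr_le (χ : DirichletCharacter ℂ N) (r a : ZMod N) :
    ‖kernelCorr χ r a‖ ≤ 2 * ∑ d : ZMod N, ‖ψ d - 1‖⁻¹ := by
  rw [kernelCorr, mul_sum]
  refine norm_sum_le_of_le _ fun d _ => ?_
  calc ‖χ (a + d) * oddIntervalKernel r d‖ = ‖χ (a + d)‖ * ‖oddIntervalKernel r d‖ := norm_mul _ _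
    _ ≤ ‖oddIntervalKernel r d‖ := mul_le_of_le_one_left (norm_nonneg _) (χ.norm_le_one _)
    _ ≤ 2 * ‖ψ d - 1‖⁻¹ := norm_oddIntervalKernel_le r d

lemma norm_corrCoeff_le (χ : DirichletCharacter ℂ N) (r a : ZMod N) :
    ‖corrCoeff χ r a‖ ≤ 2 * ∑ d : ZMod N, ‖ψ d - 1‖⁻¹ := by
  rw [corrCoeff, norm_mul]
  exact (mul_le_of_le_one_left (norm_nonneg _) (χ.norm_le_one _)).trans (norm_kernelCorr_le χ r a)

lemma norm_sum_val_mul_dft_corrCoeff_le (χ : DirichletCharacter ℂ N) (r : ZMod N) :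
    ‖∑ u : ZMod N, (u.val : ℂ) * 𝓕 (corrCoeff χ r) u‖ ≤
      2 * N * (∑ d : ZMod N, ‖ψ d - 1‖⁻¹) ^ 2 := by
  have hterm (a : ZMod N) : ‖𝓕 (fun u : ZMod N => (u.val : ℂ)) a * corrCoeff χ r a‖ ≤
      N * ‖ψ a - 1‖⁻¹ * (2 * ∑ d : ZMod N, ‖ψ d - 1‖⁻¹) := by
    rcases eq_or_ne a 0 with rfl | ha
    · simp [(odd_corrCoeff χ r).map_zero]
    · rw [norm_mul, dft_val ha, norm_div, norm_stdAddChar_neg_sub_one, Complex.norm_natCast,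
        div_eq_mul_inv]
      gcongr
      exact norm_corrCoeff_le χ r a
  rw [sum_mul_dft]
  calc ‖∑ a, 𝓕 (fun u : ZMod N => (u.val : ℂ)) a * corrCoeff χ r a‖
      ≤ ∑ a : ZMod N, N * ‖ψ a - 1‖⁻¹ * (2 * ∑ d : ZMod N, ‖ψ d - 1‖⁻¹) :=
        norm_sum_le_of_le _ fun a _ => hterm a
    _ = 2 * N * (∑ d : ZMod N, ‖ψ d - 1‖⁻¹) ^ 2 := by
      rw [← sum_mul, ← mul_sum]
      ring

lemma dft_corrCoeff (χ : DirichletCharacter ℂ N) (r u : ZMod N) :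
    𝓕 (corrCoeff χ r) u =
      ∑ a, ∑ b, χ a * χ b * ((ψ (-(a * u)) - ψ (-(b * u))) * intervalKernel r (a - b)) := by
  have hterm (a : ZMod N) : ψ (-(a * u)) * corrCoeff χ r a =
      ∑ b, χ a * χ b * ψ (-(a * u)) * intervalKernel r (a - b) -
        ∑ b, χ b * χ a * ψ (-(a * u)) * intervalKernel r (b - a) := by
    rw [corrCoeff, kernelCorr, ← (Equiv.subRight a).sum_comp, ← sum_sub_distrib, mul_sum, mul_sum]
    refine sum_congr rfl fun b _ => ?_
    rw [Equiv.subRight_apply, add_sub_cancel, oddIntervalKernel, neg_sub]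
    ring
  simp_rw [dft_apply, smul_eq_mul, hterm, sum_sub_distrib]
  rw [sum_comm (f := fun a b => χ b * χ a * _ * _), ← sum_sub_distrib]
  refine sum_congr rfl fun a _ => ?_
  rw [← sum_sub_distrib]
  exact sum_congr rfl fun b _ => by ring

lemma norm_sum_compl_sub_val_sq_le : ‖∑ u ∈ {(0 : ZMod N)}ᶜ, (N - u.val : ℂ) ^ 2‖ ≤ N ^ 3 := by
  have hterm (u : ZMod N) : ‖(N - u.val : ℂ) ^ 2‖ ≤ N ^ 2 := by
    rw [← Nat.cast_sub u.val_lt.le, norm_pow, Complex.norm_natCast]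
    gcongr
    exact Nat.sub_le _ _
  calc ‖∑ u ∈ {(0 : ZMod N)}ᶜ, (N - u.val : ℂ) ^ 2‖
      ≤ #({(0 : ZMod N)}ᶜ) * N ^ 2 := by
        rw [← nsmul_eq_mul]
        exact norm_sum_le_of_le _ (fun u _ => hterm u) |>.trans (sum_const _).le
    _ ≤ N * N ^ 2 := by
        gcongr
        exact (card_le_univ _).trans (ZMod.card N).le
    _ = N ^ 3 := by ring

variable {p : ℕ} [Fact p.Prime] {χ : DirichletCharacter ℂ p}

lemma sum_corrCoeff_sq (hχ : χ.IsQuadratic) (hχ₁ : χ ≠ 1) (r : ZMod p) :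
    ∑ a, corrCoeff χ r a ^ 2 =
      p * ∑ d, oddIntervalKernel r d ^ 2 - kernelCorr χ r 0 ^ 2 := by
  have hterm (a : ZMod p) : corrCoeff χ r a ^ 2 =
      kernelCorr χ r a * kernelCorr χ r a - if a = 0 then kernelCorr χ r 0 ^ 2 else 0 := by
    rw [corrCoeff, mul_pow, sq (χ a), mulChar_mul_self_of_isQuadratic hχ]
    split_ifs with ha
    · subst ha; ring
    · ring
  have hconv := sum_mulChar_conv_mul_inv_conv hχ₁ (oddIntervalKernel r) (oddIntervalKernel r)
  rw [hχ.inv, (odd_oddIntervalKernel r).sum_eq_zero, zero_mul, sub_zero, ZMod.card] at hconv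
  simp_rw [hterm, sum_sub_distrib, sum_ite_eq', if_pos (mem_univ _), sq]
  exact congrArg (· - _) hconv

lemma sum_dft_corrCoeff_sq (hχ : χ.IsQuadratic) (hχ₁ : χ ≠ 1) (r : ZMod p) :
    ∑ u, 𝓕 (corrCoeff χ r) u ^ 2 =
      p ^ 2 * (((p : ℂ) ^ 2 - 1) / 3 - (2 * r - 1).val * (p - (2 * r - 1).val)) +
        p * kernelCorr χ r 0 ^ 2 := by
  have hodd (a : ZMod p) : corrCoeff χ r a * corrCoeff χ r (-a) = -corrCoeff χ r a ^ 2 := by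
    rw [odd_corrCoeff]
    ring
  simp_rw [sq (𝓕 (corrCoeff χ r) _)]
  rw [sum_dft_mul_dft]
  simp_rw [hodd]
  rw [sum_neg_distrib, sum_corrCoeff_sq hχ hχ₁, sum_oddIntervalKernel_sq]
  ring

lemma card_mul_windowCorr (hχ : χ.IsQuadratic) (hχ₁ : χ ≠ 1) (r u : ZMod p) :
    p * windowCorr χ r u =
      (p - u.val) * ((if u = 0 then (p : ℂ) else 0) - 1) + 𝓕 (corrCoeff χ r) u := by
  have hprim := isPrimitive_stdAddChar p
  have hexp : p * windowCorr χ r u = ∑ a, ∑ b, χ a * χ b *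
      ∑ i ∈ range (p - u.val), stdAddChar (N := p) (a * (i + r) - b * (i + u + r)) := by
    have hgauss (i j : ZMod p) : p * (χ i * χ j) =
        ∑ a, ∑ b, χ a * χ b * stdAddChar (a * i - b * j) := by
      simpa only [hχ.inv, ZMod.card] using card_mul_inv_mulChar_mul_mulChar hχ₁ hprim i j
    simp_rw [windowCorr, mul_sum, hgauss]
    rw [sum_comm]
    exact sum_congr rfl fun a _ => sum_comm
  have hdiag : ∑ a, ∑ b, χ a * χ b *
      (if a = b then (p - u.val : ℂ) * stdAddChar (-(a * u)) else 0) =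
        (p - u.val) * ((if u = 0 then (p : ℂ) else 0) - 1) := by
    have hsum := sum_one_mulChar_mul_addChar hprim (-u)
    simp only [neg_eq_zero, ZMod.card, mul_neg] at hsum
    simp only [mul_ite, mul_zero, sum_ite_eq, mem_univ, if_true]
    rw [← hsum, mul_sum]
    refine sum_congr rfl fun a _ => ?_
    rw [mulChar_mul_self_of_isQuadratic hχ, one_mulChar_apply_eq_one_sub_ite]
    ring
  simp_rw [hexp, sum_range_stdAddChar, mul_add, sum_add_distrib]
  rw [hdiag, dft_corrCoeff]

lemma sq_mul_sum_compl_windowCorr_sq (hχ : χ.IsQuadratic) (hχ₁ : χ ≠ 1) (r : ZMod p) :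
    p ^ 2 * ∑ u ∈ {0}ᶜ, windowCorr χ r u ^ 2 =
      p ^ 2 * (((p : ℂ) ^ 2 - 1) / 3 - (2 * r - 1).val * (p - (2 * r - 1).val)) +
        p * kernelCorr χ r 0 ^ 2 + 2 * ∑ u, u.val * 𝓕 (corrCoeff χ r) u +
          ∑ u ∈ {(0 : ZMod p)}ᶜ, (p - u.val : ℂ) ^ 2 := by
  have hdft₀ : 𝓕 (corrCoeff χ r) 0 = 0 := by
    rw [dft_apply_zero, (odd_corrCoeff χ r).sum_eq_zero]
  have hsum : ∑ u, 𝓕 (corrCoeff χ r) u = 0 := by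
    rw [sum_dft, (odd_corrCoeff χ r).map_zero, mul_zero]
  calc p ^ 2 * ∑ u ∈ {0}ᶜ, windowCorr χ r u ^ 2
      = ∑ u ∈ {(0 : ZMod p)}ᶜ, (𝓕 (corrCoeff χ r) u - (p - u.val)) ^ 2 := by
        rw [mul_sum]
        refine sum_congr rfl fun u hu => ?_
        rw [← mul_pow, card_mul_windowCorr hχ hχ₁, if_neg (by simpa using hu)]
        ring
    _ = ∑ u ∈ {(0 : ZMod p)}ᶜ, (𝓕 (corrCoeff χ r) u ^ 2 - 2 * p * 𝓕 (corrCoeff χ r) u +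
          2 * (u.val * 𝓕 (corrCoeff χ r) u)) + ∑ u ∈ {(0 : ZMod p)}ᶜ, (p - u.val : ℂ) ^ 2 := by
        rw [← sum_add_distrib]
        exact sum_congr rfl fun u _ => by ring
    _ = ∑ u, (𝓕 (corrCoeff χ r) u ^ 2 - 2 * p * 𝓕 (corrCoeff χ r) u +
          2 * (u.val * 𝓕 (corrCoeff χ r) u)) + ∑ u ∈ {(0 : ZMod p)}ᶜ, (p - u.val : ℂ) ^ 2 := by
        rw [Fintype.sum_eq_add_sum_compl (0 : ZMod p), hdft₀]
        ring
    _ = p ^ 2 * (((p : ℂ) ^ 2 - 1) / 3 - (2 * r - 1).val * (p - (2 * r - 1).val)) +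
        p * kernelCorr χ r 0 ^ 2 + 2 * ∑ u, u.val * 𝓕 (corrCoeff χ r) u +
          ∑ u ∈ {(0 : ZMod p)}ᶜ, (p - u.val : ℂ) ^ 2 := by
        rw [sum_add_distrib, sum_sub_distrib, ← mul_sum, ← mul_sum, hsum,
          sum_dft_corrCoeff_sq hχ hχ₁]
        ring

lemma norm_sum_compl_windowCorr_sq_sub_le (hχ : χ.IsQuadratic) (hχ₁ : χ ≠ 1) (r : ZMod p) :
    ‖∑ u ∈ {0}ᶜ, windowCorr χ r u ^ 2 -
        (((p : ℂ) ^ 2 - 1) / 3 - (2 * r - 1).val * (p - (2 * r - 1).val))‖ ≤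
      2 * p * (1 + Real.log p) ^ 2 + p := by
  have hp : (0 : ℝ) < p := mod_cast NeZero.pos p
  set Z := ∑ d : ZMod p, ‖stdAddChar d - 1‖⁻¹
  have hZ : Z ^ 2 ≤ (p / 2 * (1 + Real.log p)) ^ 2 := by
    gcongr
    exact sum_inv_norm_stdAddChar_sub_one_le
  have hkernel : ‖(p : ℂ) * kernelCorr χ r 0 ^ 2‖ ≤ p * (2 * Z) ^ 2 := by
    rw [norm_mul, norm_pow, Complex.norm_natCast]
    gcongr
    exact norm_kernelCorr_le χ r 0
  have hval : ‖2 * ∑ u, u.val * 𝓕 (corrCoeff χ r) u‖ ≤ 2 * (2 * p * Z ^ 2) := by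
    rw [norm_mul, Complex.norm_two]
    gcongr
    exact norm_sum_val_mul_dft_corrCoeff_le χ r
  refine le_of_mul_le_mul_left ?_ (pow_pos hp 2)
  calc (p : ℝ) ^ 2 * ‖_‖
      = ‖(p : ℂ) * kernelCorr χ r 0 ^ 2 + 2 * ∑ u, u.val * 𝓕 (corrCoeff χ r) u +
          ∑ u ∈ {(0 : ZMod p)}ᶜ, (p - u.val : ℂ) ^ 2‖ := by
        rw [← Complex.norm_natCast, ← norm_pow, ← norm_mul, mul_sub,
          sq_mul_sum_compl_windowCorr_sq hχ hχ₁]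
        congr 1
        ring
    _ ≤ p * (2 * Z) ^ 2 + 2 * (2 * p * Z ^ 2) + p ^ 3 :=
        norm_add₃_le.trans (by gcongr; exact norm_sum_compl_sub_val_sq_le)
    _ = 8 * p * Z ^ 2 + p ^ 3 := by ring
    _ ≤ 8 * p * (p / 2 * (1 + Real.log p)) ^ 2 + p ^ 3 := by gcongr
    _ = p ^ 2 * (2 * p * (1 + Real.log p) ^ 2 + p) := by ring

end AutocorrelationOfCharacters

section Sequences

open Finset

lemma seqAutocorr_neg (a : ℤ → ℝ) (u : ℤ) : seqAutocorr a (-u) = seqAutocorr a u := by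
  rw [seqAutocorr, ← finsum_comp_equiv (Equiv.addRight u), seqAutocorr]
  exact finsum_congr fun i => by simp [mul_comm]

lemma seqAutocorr_eq_zero {n : ℤ} {a : ℤ → ℝ} (ha : IsSeq n a) {u : ℤ} (hu : n ≤ |u|) :
    seqAutocorr a u = 0 := by
  wlog hu₀ : 0 ≤ u generalizing u
  · rw [← seqAutocorr_neg]
    exact this (by rwa [abs_neg]) (by omega)
  rw [abs_of_nonneg hu₀] at hu
  refine finsum_eq_zero_of_forall_eq_zero fun i => ?_
  by_contra h
  have h₁ := ha i (left_ne_zero_of_mul h)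
  have h₂ := ha (i + u) (right_ne_zero_of_mul h)
  omega

lemma finsum_seqAutocorr_sq {n : ℕ} {a : ℤ → ℝ} (ha : IsSeq n a) :
    ∑ᶠ u : ℤ, seqAutocorr a u ^ 2 =
      2 * ∑ u ∈ range n, seqAutocorr a u ^ 2 - seqAutocorr a 0 ^ 2 := by
  have heven : Function.Even fun u : ℤ => seqAutocorr a u ^ 2 := fun u => by
    simp only [seqAutocorr_neg]
  have hsupp : Function.support (fun u => seqAutocorr a u ^ 2) ⊆ Icc (-n : ℤ) n := fun u hu => by
    rw [coe_Icc, Set.mem_Icc, ← abs_le]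
    by_contra! h
    exact hu (by simp [seqAutocorr_eq_zero ha h.le])
  rw [finsum_eq_sum_of_support_subset _ hsupp, sum_Icc_of_even_eq_range heven, sum_range_succ,
    seqAutocorr_eq_zero ha (Nat.abs_cast n).ge, nsmul_eq_mul]
  simp

variable {N : ℕ}

/-- The sequence of length `N` with entries `f r, f (r + 1), …`, whose aperiodic autocorrelations
are the `windowCorr f r u`. -/
def windowSeq (f : ZMod N → ℝ) (r : ZMod N) : ℤ → ℝ :=
  fun i => if 0 ≤ i ∧ i < N then f (i + r) else 0

lemma windowSeq_natCast (f : ZMod N → ℝ) (r : ZMod N) {i : ℕ} (hi : i < N) :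
    windowSeq f r i = f (i + r) := by
  rw [windowSeq, if_pos (by omega), Int.cast_natCast]

lemma isSeq_windowSeq (f : ZMod N → ℝ) (r : ZMod N) : IsSeq N (windowSeq f r) := fun i hi => by
  by_contra h
  exact hi (if_neg h)

variable [NeZero N]

lemma seqAutocorr_windowSeq (f : ZMod N → ℝ) (r u : ZMod N) :
    seqAutocorr (windowSeq f r) u.val = windowCorr f r u := by
  have hsupp : Function.support (fun i : ℤ => windowSeq f r i * windowSeq f r (i + u.val)) ⊆
      ((range (N - u.val)).map Nat.castEmbedding : Finset ℤ) := fun i hi => by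
    have h₁ := isSeq_windowSeq f r i (left_ne_zero_of_mul hi)
    have h₂ := isSeq_windowSeq f r (i + u.val) (right_ne_zero_of_mul hi)
    simp only [coe_map, Set.mem_image, mem_coe, mem_range, Nat.castEmbedding_apply]
    exact ⟨i.toNat, by omega, by omega⟩
  rw [seqAutocorr, finsum_eq_sum_of_support_subset _ hsupp, sum_map, windowCorr]
  refine sum_congr rfl fun i hi => ?_
  rw [mem_range] at hi
  rw [Nat.castEmbedding_apply, ← Nat.cast_add, windowSeq_natCast f r (by omega),
    windowSeq_natCast f r (by omega), Nat.cast_add, ZMod.natCast_zmod_val]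

lemma finsum_seqAutocorr_windowSeq_sq (f : ZMod N → ℝ) (r : ZMod N) :
    ∑ᶠ u : ℤ, seqAutocorr (windowSeq f r) u ^ 2 =
      windowCorr f r 0 ^ 2 + 2 * ∑ u ∈ {0}ᶜ, windowCorr f r u ^ 2 := by
  have hzero : seqAutocorr (windowSeq f r) 0 = windowCorr f r 0 := by
    rw [← seqAutocorr_windowSeq, ZMod.val_zero, Nat.cast_zero]
  have hrange : ∑ u ∈ range N, seqAutocorr (windowSeq f r) u ^ 2 = ∑ u, windowCorr f r u ^ 2 := by
    rw [← sum_comp_zmodVal fun n => seqAutocorr (windowSeq f r) n ^ 2]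
    simp only [seqAutocorr_windowSeq]
  rw [finsum_seqAutocorr_sq (isSeq_windowSeq f r), hzero, hrange,
    Fintype.sum_eq_add_sum_compl (0 : ZMod N)]
  ring

end Sequences

section FractionalPart

lemma abs_fract_mul_one_sub_fract_sub_le (x y : ℝ) :
    |Int.fract x * (1 - Int.fract x) - Int.fract y * (1 - Int.fract y)| ≤ |x - y| := by
  wlog hxy : x ≤ y generalizing x y
  · rw [abs_sub_comm, abs_sub_comm x]
    exact this y x (le_of_not_ge hxy)
  have hx₀ := Int.fract_nonneg x
  have hx₁ := (Int.fract_lt_one x).le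
  have hy₀ := Int.fract_nonneg y
  have hy₁ := (Int.fract_lt_one y).le
  have hx := Int.self_sub_floor x
  have hy := Int.self_sub_floor y
  rw [abs_sub_comm x, abs_of_nonneg (sub_nonneg.2 hxy)]
  rcases (Int.floor_mono hxy).eq_or_lt with hfloor | hfloor
  · have hdiff : Int.fract y - Int.fract x = y - x := by
      rw [hfloor] at hx
      linarith
    rw [abs_le]
    constructor <;> nlinarith
  · have hgap : (⌊x⌋ : ℝ) + 1 ≤ ⌊y⌋ := mod_cast hfloor
    rw [abs_le]
    constructor <;> nlinarith

lemma fract_intCast_div_natCast {N : ℕ} [NeZero N] (m : ℤ) :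
    Int.fract ((m : ℝ) / N) = (m : ZMod N).val / N := by
  rw [Int.fract_div_intCast_eq_div_intCast_mod, ← ZMod.val_intCast, Int.cast_natCast]

lemma abs_val_mul_sub_val_sub_le {N : ℕ} [NeZero N] (s : ℝ) :
    |((2 * (⌊(N : ℝ) * s⌋ : ZMod N) - 1).val * (N - (2 * (⌊(N : ℝ) * s⌋ : ZMod N) - 1).val) : ℝ) -
        N ^ 2 * (Int.fract (2 * s) * (1 - Int.fract (2 * s)))| ≤ 3 * (N : ℝ) := by
  set R := ⌊(N : ℝ) * s⌋
  have hN : (0 : ℝ) < N := mod_cast NeZero.pos N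
  have hval : ((2 * (R : ZMod N) - 1).val : ℝ) = N * Int.fract ((2 * R - 1 : ℝ) / N) := by
    have h := fract_intCast_div_natCast (N := N) (2 * R - 1)
    push_cast at h
    rw [h, mul_div_cancel₀ _ hN.ne']
  have hclose : |(2 * R - 1 : ℝ) / N - 2 * s| ≤ 3 / N := by
    have hle : (R : ℝ) ≤ N * s := Int.floor_le _
    have hlt : (N : ℝ) * s < R + 1 := Int.lt_floor_add_one _
    rw [div_sub' hN.ne', abs_div, abs_of_pos hN]
    gcongr
    rw [abs_le]
    constructor <;> linarith
  have hLip := (abs_fract_mul_one_sub_fract_sub_le _ _).trans hclose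
  rw [hval]
  calc |N * Int.fract ((2 * R - 1 : ℝ) / N) * (N - N * Int.fract ((2 * R - 1 : ℝ) / N)) -
        N ^ 2 * (Int.fract (2 * s) * (1 - Int.fract (2 * s)))|
      = (N : ℝ) ^ 2 * |Int.fract ((2 * R - 1 : ℝ) / N) * (1 - Int.fract ((2 * R - 1 : ℝ) / N)) -
          Int.fract (2 * s) * (1 - Int.fract (2 * s))| := by
        rw [← abs_of_pos (pow_pos hN 2), ← abs_mul, abs_of_pos (pow_pos hN 2)]
        congr 1
        ring
    _ ≤ N ^ 2 * (3 / N) := by gcongr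
    _ = 3 * N := by field_simp

lemma eight_mul_abs_sub_sq_eq {s : ℝ} (hs₁ : -(1 / 2) < s) (hs₂ : s ≤ 1 / 2) :
    8 * (|s| - 1 / 4) ^ 2 = 2 * (Int.fract (2 * s) - 1 / 2) ^ 2 := by
  rcases lt_or_ge s 0 with hs | hs
  · have hfract : Int.fract (2 * s) = 2 * s + 1 :=
      Int.fract_eq_iff.2 ⟨by linarith, by linarith, -1, by push_cast; ring⟩
    rw [hfract, abs_of_neg hs]
    ring
  rw [abs_of_nonneg hs]
  rcases hs₂.eq_or_lt with rfl | hlt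
  · norm_num
  · rw [Int.fract_eq_self.2 ⟨by linarith, by linarith⟩]
    ring

end FractionalPart

section LegendreSequence

open Finset

variable {p : ℕ} [Fact p.Prime]

lemma seqRotate_ternaryLegendreSeq (s : ℝ) :
    seqRotate p s (ternaryLegendreSeq p) =
      windowSeq (fun x => (quadraticChar (ZMod p) x : ℝ)) (⌊(p : ℝ) * s⌋ : ZMod p) := by
  have hp : (0 : ℤ) < p := mod_cast NeZero.pos p
  funext i
  rw [seqRotate, windowSeq]
  refine if_congr Iff.rfl ?_ rfl
  rw [ternaryLegendreSeq, if_pos ⟨Int.emod_nonneg _ hp.ne', Int.emod_lt_of_pos _ hp⟩,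
    ← jacobiSym.legendreSym.to_jacobiSym, legendreSym, ZMod.intCast_mod, Int.cast_add,
    Int.cast_natCast]

lemma windowCorr_quadraticChar_zero (r : ZMod p) :
    windowCorr (quadraticChar (ZMod p)) r 0 = (p : ℤ) - 1 := by
  simp_rw [windowCorr_zero, mulChar_mul_self_of_isQuadratic (quadraticChar_isQuadratic _),
    sum_sub_distrib, sum_const, sum_ite_eq', card_univ, ZMod.card]
  simp

lemma abs_sum_compl_windowCorr_quadraticChar_sq_sub_le (hp : p ≠ 2) (r : ZMod p) :
    |∑ u ∈ {0}ᶜ, ((windowCorr (quadraticChar (ZMod p)) r u : ℤ) : ℝ) ^ 2 -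
        (((p : ℝ) ^ 2 - 1) / 3 - (2 * r - 1).val * (p - (2 * r - 1).val))| ≤
      2 * p * (1 + Real.log p) ^ 2 + p := by
  set χ := (quadraticChar (ZMod p)).ringHomComp (Int.castRingHom ℂ)
  have hχ : χ.IsQuadratic := (quadraticChar_isQuadratic _).comp _
  have hχ₁ : χ ≠ 1 := by
    rw [MulChar.ringHomComp_ne_one_iff Int.cast_injective]
    exact quadraticChar_ne_one (by rwa [ZMod.ringChar_zmod_n])
  have hcorr (u : ZMod p) :
      windowCorr χ r u = ((windowCorr (quadraticChar (ZMod p)) r u : ℤ) : ℂ) :=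
    (map_windowCorr (Int.castRingHom ℂ) _ r u).symm
  have h := norm_sum_compl_windowCorr_sq_sub_le hχ hχ₁ r
  simp_rw [hcorr] at h
  exact_mod_cast h

lemma finsum_seqAutocorr_seqRotate_ternaryLegendreSeq_sq (s : ℝ) :
    ∑ᶠ u : ℤ, seqAutocorr (seqRotate p s (ternaryLegendreSeq p)) u ^ 2 =
      ((p : ℝ) - 1) ^ 2 + 2 * ∑ u ∈ {0}ᶜ,
        ((windowCorr (quadraticChar (ZMod p)) (⌊(p : ℝ) * s⌋ : ZMod p) u : ℤ) : ℝ) ^ 2 := by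
  have hcorr (r u : ZMod p) : windowCorr (fun x => (quadraticChar (ZMod p) x : ℝ)) r u =
      ((windowCorr (quadraticChar (ZMod p)) r u : ℤ) : ℝ) :=
    (map_windowCorr (Int.castRingHom ℝ) _ r u).symm
  simp only [seqRotate_ternaryLegendreSeq, finsum_seqAutocorr_windowSeq_sq, hcorr,
    windowCorr_quadraticChar_zero, Int.cast_sub, Int.cast_natCast, Int.cast_one]

lemma abs_finsum_seqAutocorr_seqRotate_ternaryLegendreSeq_sq_sub_le (hp : p ≠ 2) (s : ℝ) :
    |∑ᶠ u : ℤ, seqAutocorr (seqRotate p s (ternaryLegendreSeq p)) u ^ 2 -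
        p ^ 2 * (7 / 6 + 2 * (Int.fract (2 * s) - 1 / 2) ^ 2)| ≤
      4 * p * (1 + Real.log p) ^ 2 + 10 * p := by
  have hp₁ : (1 : ℝ) ≤ p := mod_cast NeZero.one_le
  have hcorr := abs_le.1 <|
    abs_sum_compl_windowCorr_quadraticChar_sq_sub_le hp (⌊(p : ℝ) * s⌋ : ZMod p)
  have hval := abs_le.1 <| abs_val_mul_sub_val_sub_le (N := p) s
  rw [finsum_seqAutocorr_seqRotate_ternaryLegendreSeq_sq, abs_le]
  constructor <;> linarith

end LegendreSequence

theorem stmt7_general (s : ℝ) {p : ℕ} (hp : p.Prime) (hp₂ : 2 < p) :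
    |1 / (p : ℝ) ^ 2 * (∑ᶠ u : ℤ, seqAutocorr (seqRotate p s (ternaryLegendreSeq p)) u ^ 2) -
        (7 / 6 + 2 * (Int.fract (2 * s) - 1 / 2) ^ 2)| ≤
      26 * (p : ℝ)⁻¹ * Real.log p ^ 2 := by
  have : Fact p.Prime := ⟨hp⟩
  have hp₃ : (3 : ℝ) ≤ p := mod_cast hp₂
  have hp₀ : (0 : ℝ) < p := by linarith
  have hlog : 1 ≤ Real.log p := by
    rw [Real.le_log_iff_exp_le hp₀]
    exact Real.exp_one_lt_three.le.trans hp₃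
  have herror : 4 * p * (1 + Real.log p) ^ 2 + 10 * p ≤ 26 * p * Real.log p ^ 2 := by
    have h : 4 * (1 + Real.log p) ^ 2 + 10 ≤ 26 * Real.log p ^ 2 := by nlinarith
    nlinarith
  have hmain := (abs_finsum_seqAutocorr_seqRotate_ternaryLegendreSeq_sq_sub_le hp₂.ne' s).trans
    herror
  rw [one_div_mul_eq_div, div_sub' (by positivity), abs_div, abs_of_pos (pow_pos hp₀ 2),
    div_le_iff₀ (by positivity)]
  convert hmain using 1
  field_simp

/-- For the rotated ternary Legendre sequence `L_s` of prime length `p > 2`,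
`(1/p²) ∑_u C_{L_s}(u)² = 7/6 + 8(|s| - 1/4)² + O(p⁻¹ (log p)²)`. -/
theorem stmt7 (s : ℝ) (hs1 : -(1/2) < s) (hs2 : s ≤ 1/2) :
    ∃ c : ℝ, 0 < c ∧ ∀ p : ℕ, p.Prime → 2 < p →
      |1 / (p : ℝ) ^ 2 *
          (∑ᶠ u : ℤ, (seqAutocorr (seqRotate p s (ternaryLegendreSeq p)) u) ^ 2)
        - (7/6 + 8 * (|s| - 1/4) ^ 2)|
        ≤ c * (p : ℝ)⁻¹ * (Real.log p) ^ 2 := by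
  refine ⟨26, by norm_num, fun p hp hp₂ => ?_⟩
  exact eight_mul_abs_sub_sq_eq hs1 hs2 ▸ stmt7_general s hp hp₂
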